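/- For integers k ≥ 3 and real numbers 0 ≤ s ≤ t/(k-1) with t ≤ 1, the iterated integral ∫_{s}^{(t-s)/(k-2)} ∫_{t_3}^{(t-s-t_3)/(k-3)} ⋯ ∫_{t_{k-2}}^{(t-s-t_3-⋯-t_{k-2})/2} 1 dt_{k-1} ⋯ dt_3 equals (t - (k-1)s)^{k-3} / ((k-2)!·(k-3)!). -/

import Mathlib

/-!
The iterated integral has a closed form for all real lower limits `a` and budgets `u`:
`nestedVol m a u = (u - (m+1) a)^m / ((m+1)! m!)`. This goes by induction on the number `m` of
variables. By the induction hypothesis the outer integrand is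
`(u - x - (m+1) x)^m = (u - (m+2) x)^m` up to a constant; this is the `m`-th power of an affine
function vanishing exactly at the upper limit `u / (m+2)`, so integrating it contributes the factor
`1 / ((m+1)(m+2))` and only the boundary term at `a`. Interval integrals are signed, so no order
between `a` and `u / (m+2)` is needed.
-/


open MeasureTheory

/-- `nestedVol m a u` is the iterated integral with `m` variables
`∫_a^{u/(m+1)} ∫_{x₁}^{(u-x₁)/m} ⋯ 1 ⋯`: at each step the next variable ranges
from the previous one up to (remaining budget)/(number of variables left + 1). -/
noncomputable def nestedVol : ℕ → ℝ → ℝ → ℝ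
  | 0, _, _ => 1
  | m + 1, a, u => ∫ x in a..(u / ((m : ℝ) + 2)), nestedVol m x (u - x)

/-- The integral of a power of an affine function up to the zero of that function. -/
lemma integral_affine_pow (m : ℕ) (a u c : ℝ) (hc : c ≠ 0) :
    ∫ x in a..(u / c), (u - c * x) ^ m = (u - c * a) ^ (m + 1) / (c * ((m : ℝ) + 1)) := by
  have hm : (m : ℝ) + 1 ≠ 0 := by positivity
  rw [intervalIntegral.integral_comp_sub_mul (fun y => y ^ m) hc u, integral_pow,
    mul_div_cancel₀ u hc, sub_self, zero_pow (Nat.succ_ne_zero m), sub_zero, smul_eq_mul]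
  field_simp

lemma nestedVol_eq (m : ℕ) (a u : ℝ) :
    nestedVol m a u = (u - ((m : ℝ) + 1) * a) ^ m
      / ((Nat.factorial (m + 1) : ℝ) * (Nat.factorial m : ℝ)) := by
  induction m generalizing a u with
  | zero => simp [nestedVol]
  | succ m ih =>
    have hc : (m : ℝ) + 2 ≠ 0 := by positivity
    have hm : (m : ℝ) + 1 ≠ 0 := by positivity
    have hint : ∀ x : ℝ, nestedVol m x (u - x) = (u - ((m : ℝ) + 2) * x) ^ m
        / ((Nat.factorial (m + 1) : ℝ) * (Nat.factorial m : ℝ)) := by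
      intro x
      rw [ih]
      congr 2
      ring
    simp only [nestedVol, hint]
    rw [intervalIntegral.integral_div, integral_affine_pow m a u _ hc,
      Nat.factorial_succ (m + 1), Nat.factorial_succ m]
    have hf : (Nat.factorial m : ℝ) ≠ 0 := by positivity
    push_cast
    rw [show (m : ℝ) + 1 + 1 = m + 2 by ring]
    field_simp

/-- For `k ≥ 3` and `0 ≤ s ≤ t/(k-1)`, `t ≤ 1`, the iterated integral
`∫_s^{(t-s)/(k-2)} ∫_{t₃}^{(t-s-t₃)/(k-3)} ⋯ ∫_{t_{k-2}}^{(t-s-t₃-⋯-t_{k-2})/2}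
 1 dt_{k-1} ⋯ dt₃` equals `(t-(k-1)s)^{k-3} / ((k-2)!·(k-3)!)`. -/
theorem stmt_12 (k : ℕ) (hk : 3 ≤ k) (s t : ℝ) (hs : 0 ≤ s)
    (hst : s ≤ t / ((k : ℝ) - 1)) (ht : t ≤ 1) :
    nestedVol (k - 3) s (t - s)
      = (t - ((k : ℝ) - 1) * s) ^ (k - 3)
        / ((Nat.factorial (k - 2) : ℝ) * (Nat.factorial (k - 3) : ℝ)) := by
  obtain ⟨m, rfl⟩ := Nat.exists_eq_add_of_le' hk
  rw [nestedVol_eq, show m + 3 - 3 = m by omega, show m + 3 - 2 = m + 1 by omega]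
  congr 2
  push_cast
  ring
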